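/- arXiv:1207.0632 — 4 statements merged into one kernel-verified Lean document; each statement's English description precedes it below -/
import Mathlib

section
/- If the matrix G is invertible, then the periodic Gabor functions are linearly independent over ℂ, so the expansion coefficients in the pg basis are unique: if c_0, …, c_{N−1} ∈ ℂ satisfy Σ_{j=0}^{N−1} c_j · g̃_j(t) = 0 for all t ∈ ℝ, then c_j = 0 for every j. -/
/-!
The Dirichlet kernel is cardinal on the sample grid: `D (t_l - t_k) = δ_{lk}`
(`dirichlet_samplePt_sub`), because `D (t_l - t_k)` is, up to a unit, the normalised geometric sum
of the `N`-th root of unity `exp (2πi (l - k) / N)`. Hence `g̃_j (t_l) = G_{lj}`, and a vanishing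
combination `∑ c_j g̃_j` evaluated on the grid says `G c = 0`, so `c = 0` as `G` is invertible.
-/

open Complex Finset Matrix

/-- The Dirichlet (periodic sinc) kernel:
`D N T t = (1/N) Σ_{m=-(N-1)/2}^{(N-1)/2} exp(i m ω₀ t)` with `ω₀ = 2π/T`. -/
noncomputable def dirichlet (N : ℕ) (T : ℝ) (t : ℝ) : ℂ :=
  (1 / (N : ℂ)) *
    ∑ m ∈ Finset.Icc (-(((N : ℤ) - 1) / 2)) (((N : ℤ) - 1) / 2),
      Complex.exp (Complex.I * (m : ℂ) * ((2 * Real.pi / T : ℝ) : ℂ) * (t : ℂ))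

/-- The sample points `t_k = k T / N` for `k = 0, …, N-1`. -/
noncomputable def samplePt (N : ℕ) (T : ℝ) (k : Fin N) : ℝ := (k : ℝ) * T / N

/-- The periodic Gabor (pg) functions: `g̃_j(t) = Σ_k G_{kj} D(t - t_k)`. -/
noncomputable def pg (N : ℕ) (T : ℝ) (G : Matrix (Fin N) (Fin N) ℂ) (j : Fin N) (t : ℝ) : ℂ :=
  ∑ k : Fin N, G k j * dirichlet N T (t - samplePt N T k)

/-- The frequency window `-M, …, M` shifted to `0, …, 2M`. -/
lemma sum_zpow_window (M : ℕ) (z : ℂ) (hz : z ≠ 0) :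
    ∑ m ∈ Finset.Icc (-(M : ℤ)) (M : ℤ), z ^ m
      = z ^ (-(M : ℤ)) * ∑ i ∈ Finset.range (2 * M + 1), z ^ i := by
  rw [Finset.mul_sum]
  symm
  refine Finset.sum_bij (fun (i : ℕ) _ => (i : ℤ) - M) ?_ ?_ ?_ ?_
  · intro i hi
    simp only [Finset.mem_range, Finset.mem_Icc] at hi ⊢
    omega
  · intro i _ j _ hij
    simpa using hij
  · intro m hm
    simp only [Finset.mem_Icc] at hm
    refine ⟨(m + M).toNat, ?_, ?_⟩
    · simp only [Finset.mem_range]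
      omega
    · omega
  · intro i _
    rw [← zpow_natCast z i, ← zpow_add₀ hz]
    congr 1
    ring

lemma dirichlet_samplePt_sub (N : ℕ) (hN : Odd N) (T : ℝ) (hT : 0 < T) (l k : Fin N) :
    dirichlet N T (samplePt N T l - samplePt N T k) = if l = k then 1 else 0 := by
  obtain ⟨M, hM⟩ := hN
  have hN0 : (N : ℂ) ≠ 0 := by
    have : N ≠ 0 := by omega
    exact_mod_cast this
  have hT0 : (T : ℂ) ≠ 0 := by exact_mod_cast hT.ne'
  have hhalf : ((N : ℤ) - 1) / 2 = M := by omega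
  set z : ℂ := Complex.exp (2 * Real.pi * Complex.I * (((l : ℂ) - k) / N)) with hz
  have hterm : ∀ m : ℤ, Complex.exp (Complex.I * (m : ℂ) * ((2 * Real.pi / T : ℝ) : ℂ) *
      ((samplePt N T l - samplePt N T k : ℝ) : ℂ)) = z ^ m := by
    intro m
    rw [hz, ← Complex.exp_int_mul]
    congr 1
    simp only [samplePt]
    push_cast
    field_simp
  unfold dirichlet
  rw [hhalf, Finset.sum_congr rfl fun m _ => hterm m,
    sum_zpow_window M z (Complex.exp_ne_zero _), ← hM]
  split_ifs with hlk
  · have hz1 : z = 1 := by simp [hz, hlk]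
    simp [hz1, hN0]
  · have hzN : z ^ N = 1 := by
      rw [hz, ← Complex.exp_nat_mul, Complex.exp_eq_one_iff]
      refine ⟨(l : ℤ) - k, ?_⟩
      push_cast
      field_simp
    have hz1 : z ≠ 1 := by
      intro h1
      rw [hz, Complex.exp_eq_one_iff] at h1
      obtain ⟨n, hn⟩ := h1
      have h2 : ((l : ℂ) - k) / N = n := by
        apply mul_left_cancel₀ Complex.two_pi_I_ne_zero
        rw [hn]
        ring
      rw [div_eq_iff hN0] at h2
      have h3 : ((l : ℕ) : ℤ) - ((k : ℕ) : ℤ) = n * N := by exact_mod_cast h2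
      have h4 : ((l : ℕ) : ℤ) - ((k : ℕ) : ℤ) = 0 :=
        -- `|l - k| < N` and `N ∣ l - k`
        Int.eq_zero_of_abs_lt_dvd (m := (N : ℤ)) ⟨n, by rw [h3, mul_comm]⟩ (by
          rw [abs_lt]
          omega)
      exact hlk (Fin.ext (by omega))
    rw [geom_sum_eq hz1, hzN]
    simp

lemma pg_samplePt (N : ℕ) (hN : Odd N) (T : ℝ) (hT : 0 < T) (G : Matrix (Fin N) (Fin N) ℂ)
    (j l : Fin N) : pg N T G j (samplePt N T l) = G l j := by
  simp [pg, dirichlet_samplePt_sub N hN T hT]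

theorem pg_linearIndependent (N : ℕ) (hN : Odd N) (hNpos : 0 < N)
    (T : ℝ) (hT : 0 < T) (G : Matrix (Fin N) (Fin N) ℂ) (hG : IsUnit G)
    (c : Fin N → ℂ) (h : ∀ t : ℝ, ∑ j : Fin N, c j * pg N T G j t = 0) :
    ∀ j : Fin N, c j = 0 := by
  have hGc : G *ᵥ c = G *ᵥ 0 := by
    ext l
    have hl := h (samplePt N T l)
    simp only [pg_samplePt N hN T hT] at hl
    simpa [Matrix.mulVec, dotProduct, mul_comm] using hl
  exact congrFun (Matrix.mulVec_injective_of_isUnit hG hGc)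
end

section
/- For invertible G, the biorthogonal Gabor functions and the periodic Gabor functions are mutually biorthogonal with respect to the discrete sample inner product: for all i, j ∈ {0,…,N−1}, Σ_{k=0}^{N−1} conj(b_i(t_k)) · g̃_j(t_k) = 1 if i = j and 0 if i ≠ j. -/
/-!
The kernel `D` is cardinal on the sample grid: `D (t_k - t_l) = δ_{kl}`, since for `k ≠ l` the sum
defining it is, up to a power of `w = exp (2πi (k - l) / N)`, the full geometric sum of an `N`-th
root of unity `w ≠ 1` (`dirichlet_sample`). Hence `g̃_j (t_k) = G_{kj}` and
`b_n (t_k) = (G S⁻¹)_{kn}`, so the sample inner products form the matrix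
`(G S⁻¹)ᴴ G = S⁻¹ Gᴴ G = 1`, where `S = Gᴴ G` is Hermitian and invertible.
-/

open Complex Finset Matrix ComplexConjugate

/-- The biorthogonal Gabor (bg) functions: `b_n(t) = Σ_m g̃_m(t) (S⁻¹)_{mn}`, `S = G†G`. -/
noncomputable def bg (N : ℕ) (T : ℝ) (G : Matrix (Fin N) (Fin N) ℂ) (n : Fin N) (t : ℝ) : ℂ :=
  ∑ m : Fin N, pg N T G m t * (Gᴴ * G)⁻¹ m n

/-- A symmetric sum of powers is a shifted geometric sum. -/
lemma sum_Icc_zpow (M : ℕ) (w : ℂ) (hw : w ≠ 0) :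
    ∑ m ∈ Finset.Icc (-(M : ℤ)) M, w ^ m
      = w ^ (-(M : ℤ)) * ∑ n ∈ Finset.range (2 * M + 1), w ^ n := by
  rw [Finset.mul_sum]
  refine Finset.sum_nbij' (fun m => (m + M).toNat) (fun n => (n : ℤ) - M) ?_ ?_ ?_ ?_ ?_
  · intro m hm
    simp only [Finset.mem_Icc, Finset.mem_range] at *
    omega
  · intro n hn
    simp only [Finset.mem_Icc, Finset.mem_range] at *
    omega
  · intro m hm
    simp only [Finset.mem_Icc] at *
    omega
  · intro n hn
    simp
  · intro m hm
    simp only [Finset.mem_Icc] at hm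
    rw [← zpow_natCast, ← zpow_add₀ hw]
    congr 1
    omega

/-- The Dirichlet kernel is cardinal on the sample grid. -/
lemma dirichlet_sample (N : ℕ) (hN : Odd N) (T : ℝ) (hT : 0 < T) (k l : Fin N) :
    dirichlet N T (samplePt N T k - samplePt N T l) = if k = l then 1 else 0 := by
  obtain ⟨M, rfl⟩ := hN
  have hN0 : ((2 * M + 1 : ℕ) : ℂ) ≠ 0 := Nat.cast_ne_zero.mpr (by omega)
  have hT0 : (T : ℂ) ≠ 0 := by exact_mod_cast hT.ne'
  have hζ := Complex.isPrimitiveRoot_exp (2 * M + 1) (by omega)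
  set ζ := Complex.exp (2 * Real.pi * Complex.I / ((2 * M + 1 : ℕ) : ℂ)) with hζdef
  set w : ℂ := ζ ^ ((k : ℤ) - (l : ℤ)) with hw
  have hw0 : w ≠ 0 := zpow_ne_zero _ (Complex.exp_ne_zero _)
  have hM : (((2 * M + 1 : ℕ) : ℤ) - 1) / 2 = M := by omega
  have hterm : ∀ m : ℤ, Complex.exp (Complex.I * (m : ℂ) * ((2 * Real.pi / T : ℝ) : ℂ) *
      ((samplePt (2 * M + 1) T k - samplePt (2 * M + 1) T l : ℝ) : ℂ)) = w ^ m := by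
    intro m
    rw [hw, ← _root_.zpow_mul, hζdef, ← Complex.exp_int_mul]
    congr 1
    simp only [samplePt]
    push_cast at hN0 ⊢
    field_simp
  unfold dirichlet
  rw [hM, Finset.sum_congr rfl (fun m _ => hterm m), sum_Icc_zpow M w hw0]
  split_ifs with h
  · have h1 : w = 1 := by simp [hw, h]
    simp only [h1, _root_.one_zpow, one_pow, Finset.sum_const, Finset.card_range, one_mul,
      nsmul_eq_mul, mul_one]
    exact one_div_mul_cancel hN0
  · have hwN : w ^ (2 * M + 1) = 1 := by
      rw [hw, ← zpow_natCast, zpow_comm, zpow_natCast, hζ.pow_eq_one, _root_.one_zpow]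
    have hw1 : w ≠ 1 := by
      intro hc
      have hd := (hζ.zpow_eq_one_iff_dvd _).mp hc
      have hk := k.isLt
      have hl := l.isLt
      have := Int.eq_zero_of_abs_lt_dvd hd (by rw [abs_lt]; omega)
      exact h (Fin.ext (by omega))
    rw [geom_sum_eq hw1, hwN]
    simp

lemma pg_sample (N : ℕ) (hN : Odd N) (T : ℝ) (hT : 0 < T) (G : Matrix (Fin N) (Fin N) ℂ)
    (j k : Fin N) : pg N T G j (samplePt N T k) = G k j := by
  simp [pg, dirichlet_sample N hN T hT]

lemma bg_sample (N : ℕ) (hN : Odd N) (T : ℝ) (hT : 0 < T) (G : Matrix (Fin N) (Fin N) ℂ)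
    (n k : Fin N) : bg N T G n (samplePt N T k) = (G * (Gᴴ * G)⁻¹) k n := by
  simp [bg, pg_sample N hN T hT, Matrix.mul_apply]

theorem bg_pg_biorthogonal (N : ℕ) (hN : Odd N) (hNpos : 0 < N)
    (T : ℝ) (hT : 0 < T) (G : Matrix (Fin N) (Fin N) ℂ) (hG : IsUnit G) (i j : Fin N) :
    ∑ k : Fin N, conj (bg N T G i (samplePt N T k)) * pg N T G j (samplePt N T k)
      = if i = j then 1 else 0 := by
  have hS : IsUnit (Gᴴ * G) := hG.star.mul hG
  have key : (G * (Gᴴ * G)⁻¹)ᴴ * G = 1 := by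
    rw [Matrix.conjTranspose_mul, Matrix.conjTranspose_nonsing_inv,
      (Matrix.isHermitian_conjTranspose_mul_self G).eq, Matrix.mul_assoc,
      Matrix.nonsing_inv_mul _ ((Matrix.isUnit_iff_isUnit_det _).mp hS)]
  have hij := congrFun (congrFun key i) j
  rw [Matrix.mul_apply, Matrix.one_apply] at hij
  simp only [bg_sample N hN T hT, pg_sample N hN T hT]
  exact hij
end

section
/- For invertible G, the biorthogonal-exchange expansion holds: for every function x : ℝ → ℂ that is band-limited with period T and every t ∈ ℝ, x(t) = Σ_{n=0}^{N−1} b_n(t) · d_n, where the coefficients are the sample inner products d_n = Σ_{k=0}^{N−1} conj(G_{kn}) · x(t_k). -/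
/-!
A band-limited function is recovered from its samples by the Dirichlet kernel,
`x(t) = Σ_k D(t - t_k) x(t_k)` (`sampling_formula`); for a single harmonic this is the orthogonality
of the characters of `ℤ/N` (`sum_exp_eq`), as two frequencies in the band differ by less than `N`.
Writing `D` for the row vector `D(t - t_k)` and `X` for the column vector of samples, the right-hand
side of the expansion is `D G (G†G)⁻¹ G† X`, and `G (G†G)⁻¹ G† = 1` because `G` is invertible.
-/

open Complex Finset Matrix ComplexConjugate

/-- A function is band-limited with period `T` if it is a linear combination of the
harmonics `exp(i m ω₀ t)` for `|m| ≤ (N-1)/2`, where `ω₀ = 2π/T`. -/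
def BandLimited (N : ℕ) (T : ℝ) (x : ℝ → ℂ) : Prop :=
  ∃ a : ℤ → ℂ, ∀ t : ℝ,
    x t = ∑ m ∈ Finset.Icc (-(((N : ℤ) - 1) / 2)) (((N : ℤ) - 1) / 2),
      a m * Complex.exp (Complex.I * (m : ℂ) * ((2 * Real.pi / T : ℝ) : ℂ) * (t : ℂ))

/-- Orthogonality of characters: the sum over `k` of `exp(2πi p k / N)` vanishes for
`0 < |p| < N`, since `exp(2πi p / N)` is then an `N`-th root of unity other than `1`. -/
lemma sum_exp_eq (N : ℕ) (hN : 0 < N) (p : ℤ) (hp : |p| < N) :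
    ∑ k : Fin N, Complex.exp (2 * Real.pi * I * p / N * (k : ℕ)) = if p = 0 then (N : ℂ) else 0 := by
  have hN0 : (N : ℂ) ≠ 0 := by exact_mod_cast hN.ne'
  split_ifs with h
  · simp [h]
  · rw [Fin.sum_univ_eq_sum_range (fun k => Complex.exp (2 * Real.pi * I * p / N * (k : ℕ)))]
    have h1 : Complex.exp (2 * Real.pi * I * p / N) ≠ 1 := by
      rw [Ne, Complex.exp_eq_one_iff]
      rintro ⟨n, hn⟩
      have hpi : (2 * Real.pi * I : ℂ) ≠ 0 := Complex.two_pi_I_ne_zero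
      have h2 : (p : ℂ) = n * N := by
        field_simp at hn
        apply mul_left_cancel₀ hpi
        linear_combination (2 * Real.pi * I) * hn
      have h3 : p = n * N := by exact_mod_cast h2
      exact h (Int.eq_zero_of_abs_lt_dvd ⟨n, by rw [h3, mul_comm]⟩ hp)
    have hpow : Complex.exp (2 * Real.pi * I * p / N) ^ N = 1 := by
      rw [← Complex.exp_nat_mul, Complex.exp_eq_one_iff]
      exact ⟨p, by field_simp⟩
    have h4 : ∀ k : ℕ, Complex.exp (2 * Real.pi * I * p / N * (k : ℕ))
        = Complex.exp (2 * Real.pi * I * p / N) ^ k := fun k => by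
      rw [← Complex.exp_nat_mul, mul_comm]
    simp_rw [h4]
    rw [geom_sum_eq h1, hpow, sub_self, zero_div]

/-- A harmonic in the band is reproduced by the Dirichlet kernel from its samples. -/
lemma sampling_harmonic (N : ℕ) (hN : 0 < N) (T : ℝ) (hT : 0 < T) (t : ℝ) (m : ℤ)
    (hm : m ∈ Finset.Icc (-(((N : ℤ) - 1) / 2)) (((N : ℤ) - 1) / 2)) :
    ∑ k : Fin N, dirichlet N T (t - samplePt N T k) *
      Complex.exp (I * (m : ℂ) * ((2 * Real.pi / T : ℝ) : ℂ) * (samplePt N T k : ℂ))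
    = Complex.exp (I * (m : ℂ) * ((2 * Real.pi / T : ℝ) : ℂ) * (t : ℂ)) := by
  have hN0 : (N : ℂ) ≠ 0 := by exact_mod_cast hN.ne'
  have hT0 : (T : ℂ) ≠ 0 := by exact_mod_cast hT.ne'
  simp_rw [dirichlet, mul_assoc (1 / (N : ℂ)), Finset.sum_mul]
  rw [← Finset.mul_sum, Finset.sum_comm]
  have key : ∀ l ∈ Finset.Icc (-(((N : ℤ) - 1) / 2)) (((N : ℤ) - 1) / 2),
      ∑ k : Fin N, Complex.exp (I * (l : ℂ) * ((2 * Real.pi / T : ℝ) : ℂ)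
          * ((t - samplePt N T k : ℝ) : ℂ)) *
        Complex.exp (I * (m : ℂ) * ((2 * Real.pi / T : ℝ) : ℂ) * (samplePt N T k : ℂ))
      = if l = m then
          N * Complex.exp (I * (m : ℂ) * ((2 * Real.pi / T : ℝ) : ℂ) * (t : ℂ)) else 0 := by
    intro l hl
    rw [Finset.mem_Icc] at hl hm
    have e : ∀ k : Fin N, Complex.exp (I * (l : ℂ) * ((2 * Real.pi / T : ℝ) : ℂ)
          * ((t - samplePt N T k : ℝ) : ℂ)) *
        Complex.exp (I * (m : ℂ) * ((2 * Real.pi / T : ℝ) : ℂ) * (samplePt N T k : ℂ))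
        = Complex.exp (I * (l : ℂ) * ((2 * Real.pi / T : ℝ) : ℂ) * (t : ℂ)) *
          Complex.exp (2 * Real.pi * I * (m - l : ℤ) / N * (k : ℕ)) := fun k => by
      rw [← Complex.exp_add, ← Complex.exp_add]
      congr 1
      simp only [samplePt]
      push_cast
      field_simp
      ring
    simp_rw [e]
    rw [← Finset.mul_sum, sum_exp_eq N hN (m - l) (by rw [abs_lt]; omega)]
    by_cases h : l = m
    · subst h
      simp [mul_comm]
    · rw [if_neg (by omega), if_neg h, mul_zero]
  rw [Finset.sum_congr rfl key, Finset.sum_ite_eq' _ m, if_pos hm]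
  field_simp

lemma sampling_formula (N : ℕ) (hN : 0 < N) (T : ℝ) (hT : 0 < T) (x : ℝ → ℂ)
    (hx : BandLimited N T x) (t : ℝ) :
    x t = ∑ k : Fin N, dirichlet N T (t - samplePt N T k) * x (samplePt N T k) := by
  obtain ⟨a, ha⟩ := hx
  simp_rw [ha, Finset.mul_sum]
  rw [Finset.sum_comm]
  refine Finset.sum_congr rfl fun m hm => ?_
  rw [← sampling_harmonic N hN T hT t m hm, Finset.mul_sum]
  exact Finset.sum_congr rfl fun k _ => by ring

theorem biorthogonal_exchange_expansion (N : ℕ) (hN : Odd N) (hNpos : 0 < N)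
    (T : ℝ) (hT : 0 < T) (G : Matrix (Fin N) (Fin N) ℂ) (hG : IsUnit G)
    (x : ℝ → ℂ) (hx : BandLimited N T x) (t : ℝ) :
    x t = ∑ n : Fin N,
      bg N T G n t * (∑ k : Fin N, conj (G k n) * x (samplePt N T k)) := by
  have hdet : IsUnit G.det := (Matrix.isUnit_iff_isUnit_det G).1 hG
  have hdetH : IsUnit Gᴴ.det := by
    rw [Matrix.det_conjTranspose]
    exact hdet.star
  have hproj : G * (Gᴴ * G)⁻¹ * Gᴴ = 1 := by
    rw [Matrix.mul_inv_rev, ← Matrix.mul_assoc, Matrix.mul_nonsing_inv G hdet, Matrix.one_mul,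
      Matrix.nonsing_inv_mul _ hdetH]
  set D : Fin N → ℂ := fun k => dirichlet N T (t - samplePt N T k) with hD
  set X : Fin N → ℂ := fun k => x (samplePt N T k) with hX
  have hpg : ∀ j, pg N T G j t = (D ᵥ* G) j := fun j =>
    Finset.sum_congr rfl fun k _ => mul_comm _ _
  have hbg : ∀ n, bg N T G n t = ((D ᵥ* G) ᵥ* (Gᴴ * G)⁻¹) n := fun n =>
    Finset.sum_congr rfl fun m _ => by rw [hpg]
  have hsum : ∑ n : Fin N, bg N T G n t * (∑ k : Fin N, conj (G k n) * x (samplePt N T k))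
      = ((D ᵥ* G) ᵥ* (Gᴴ * G)⁻¹) ⬝ᵥ (Gᴴ *ᵥ X) :=
    Finset.sum_congr rfl fun n _ => by rw [hbg]; rfl
  rw [hsum, Matrix.dotProduct_mulVec, Matrix.vecMul_vecMul, Matrix.vecMul_vecMul,
    ← Matrix.mul_assoc, hproj,
    Matrix.vecMul_one]
  exact sampling_formula N hNpos T hT x hx t
end

section
/- The continuous inner product of a periodic Gabor function with a band-limited signal reduces to a discrete sum over the samples: for every function x : ℝ → ℂ that is band-limited with period T and every n ∈ {0,…,N−1}, (N/T) · ∫_0^T conj(g̃_n(t)) · x(t) dt = Σ_{k=0}^{N−1} conj(G_{kn}) · x(t_k). -/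
/-!
The harmonics `exp(i m ω₀ t)` are orthogonal on `[0, T]` with squared norm `T`
(`integral_harmonic`), so `(N/T) conj D(· - s)` is the reproducing kernel of the band-limited
functions (`dirichlet_reproducing`): integrating `x` against it returns `x s`. Conjugation
and the integral are additive, so integrating against the combination `Σ_k G_{kn} D(· - t_k)`
returns `Σ_k conj(G_{kn}) x(t_k)`.
-/

open Complex Finset Matrix ComplexConjugate

lemma integral_harmonic (T : ℝ) (hT : 0 < T) (k : ℤ) :
    ∫ t in (0 : ℝ)..T, Complex.exp (Complex.I * (k : ℂ) * ((2 * Real.pi / T : ℝ) : ℂ) * (t : ℂ))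
      = if k = 0 then (T : ℂ) else 0 := by
  have hT' : (T : ℂ) ≠ 0 := by exact_mod_cast hT.ne'
  split_ifs with hk
  · simp [hk]
  · have hc : Complex.I * (k : ℂ) * ((2 * Real.pi / T : ℝ) : ℂ) ≠ 0 := by
      have : (2 * Real.pi / T : ℝ) ≠ 0 := by positivity
      refine mul_ne_zero (mul_ne_zero Complex.I_ne_zero (by exact_mod_cast hk)) ?_
      exact_mod_cast this
    rw [integral_exp_mul_complex hc]
    have h1 : Complex.I * (k : ℂ) * ((2 * Real.pi / T : ℝ) : ℂ) * (T : ℂ)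
        = k * (2 * Real.pi * Complex.I) := by
      push_cast
      field_simp
    rw [h1, Complex.exp_int_mul_two_pi_mul_I]
    simp

lemma conj_dirichlet_sub (N : ℕ) (T t s : ℝ) :
    conj (dirichlet N T (t - s)) = (1 / (N : ℂ)) *
      ∑ m ∈ Finset.Icc (-(((N : ℤ) - 1) / 2)) (((N : ℤ) - 1) / 2),
        Complex.exp (Complex.I * (m : ℂ) * ((2 * Real.pi / T : ℝ) : ℂ) * (s : ℂ)) *
        Complex.exp (-(Complex.I * (m : ℂ) * ((2 * Real.pi / T : ℝ) : ℂ) * (t : ℂ))) := by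
  unfold dirichlet
  rw [map_mul, map_sum]
  congr 1
  · simp
  · refine Finset.sum_congr rfl fun m _ => ?_
    rw [← Complex.exp_conj, ← Complex.exp_add]
    congr 1
    simp only [map_mul, Complex.conj_I, Complex.conj_ofReal, map_intCast]
    push_cast
    ring

lemma continuous_dirichlet (N : ℕ) (T : ℝ) : Continuous (dirichlet N T) := by
  unfold dirichlet
  fun_prop

lemma BandLimited.continuous {N : ℕ} {T : ℝ} {x : ℝ → ℂ} (hx : BandLimited N T x) :
    Continuous x := by
  obtain ⟨a, ha⟩ := hx
  rw [funext ha]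
  fun_prop

/-- The reproducing property of the Dirichlet kernel on band-limited functions. -/
lemma dirichlet_reproducing (N : ℕ) (hNpos : 0 < N) (T : ℝ) (hT : 0 < T)
    (x : ℝ → ℂ) (hx : BandLimited N T x) (s : ℝ) :
    ((N / T : ℝ) : ℂ) * ∫ t in (0 : ℝ)..T, conj (dirichlet N T (t - s)) * x t = x s := by
  obtain ⟨a, ha⟩ := hx
  have hT' : (T : ℂ) ≠ 0 := by exact_mod_cast hT.ne'
  have hN' : (N : ℂ) ≠ 0 := by exact_mod_cast hNpos.ne'
  set S := Finset.Icc (-(((N : ℤ) - 1) / 2)) (((N : ℤ) - 1) / 2) with hS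
  set w : ℂ := ((2 * Real.pi / T : ℝ) : ℂ) with hw
  have key : ∀ t : ℝ, conj (dirichlet N T (t - s)) * x t =
      ∑ m ∈ S, ∑ l ∈ S, (1 / (N : ℂ) * Complex.exp (Complex.I * (m : ℂ) * w * (s : ℂ)) * a l) *
        Complex.exp (Complex.I * ((l - m : ℤ) : ℂ) * w * (t : ℂ)) := by
    intro t
    rw [conj_dirichlet_sub, ha t, mul_assoc, Finset.sum_mul_sum, Finset.mul_sum]
    refine Finset.sum_congr rfl fun m _ => ?_
    rw [Finset.mul_sum]
    refine Finset.sum_congr rfl fun l _ => ?_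
    have : Complex.exp (Complex.I * ((l - m : ℤ) : ℂ) * w * (t : ℂ)) =
        Complex.exp (-(Complex.I * (m : ℂ) * w * (t : ℂ))) *
          Complex.exp (Complex.I * (l : ℂ) * w * (t : ℂ)) := by
      rw [← Complex.exp_add]
      congr 1
      push_cast
      ring
    rw [this]
    ring
  simp_rw [key]
  rw [intervalIntegral.integral_finsetSum
    fun m _ => Continuous.intervalIntegrable (by fun_prop) _ _]
  have inner : ∀ m ∈ S, (∫ t in (0 : ℝ)..T, ∑ l ∈ S,
      (1 / (N : ℂ) * Complex.exp (Complex.I * (m : ℂ) * w * (s : ℂ)) * a l) *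
        Complex.exp (Complex.I * ((l - m : ℤ) : ℂ) * w * (t : ℂ))) =
      1 / (N : ℂ) * Complex.exp (Complex.I * (m : ℂ) * w * (s : ℂ)) * a m * T := by
    intro m hm
    rw [intervalIntegral.integral_finsetSum
      fun l _ => Continuous.intervalIntegrable (by fun_prop) _ _]
    simp_rw [intervalIntegral.integral_const_mul, hw, integral_harmonic T hT, sub_eq_zero]
    simp [hm]
  rw [Finset.sum_congr rfl inner, ha s, Finset.mul_sum]
  refine Finset.sum_congr rfl fun m _ => ?_
  push_cast
  field_simp

theorem pg_inner_product_with_signal (N : ℕ) (hN : Odd N) (hNpos : 0 < N)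
    (T : ℝ) (hT : 0 < T) (G : Matrix (Fin N) (Fin N) ℂ)
    (x : ℝ → ℂ) (hx : BandLimited N T x) (n : Fin N) :
    ((N / T : ℝ) : ℂ) * ∫ t in (0 : ℝ)..T, conj (pg N T G n t) * x t
      = ∑ k : Fin N, conj (G k n) * x (samplePt N T k) := by
  have hxc := hx.continuous
  have hD := continuous_dirichlet N T
  have hconj := Complex.continuous_conj
  simp only [pg, map_sum, map_mul, Finset.sum_mul, mul_assoc]
  rw [intervalIntegral.integral_finsetSum
    fun k _ => Continuous.intervalIntegrable (by fun_prop) _ _, Finset.mul_sum]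
  refine Finset.sum_congr rfl fun k _ => ?_
  rw [intervalIntegral.integral_const_mul, mul_left_comm,
    dirichlet_reproducing N hNpos T hT x hx]
end
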